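/- Let N ≥ 1 be odd and q = e^{4iπ/N}. Then the quadratic Gauss sum G_N = Σ_{k=0}^{N−1} e^{−2iπk²/N} equals √N if N ≡ 1 (mod 4) and equals −i√N if N ≡ 3 (mod 4). -/

import Mathlib

open Complex

/-!
The argument is Gauss's. The alternating sum over row `m + 2` of the `q`-binomial coefficients
telescopes to `1 - q ^ (m+1)` times the one over row `m`, whence
`∑ k ≤ 2n, (-1) ^ k [2n, k]_q = ∏ j < n, (1 - q ^ (2j+1))`. If `ζ` is a primitive root of unity of
odd order `2n + 1` and `q = ζ⁻²`, then `[2n, k]_q = (-1) ^ k ζ ^ (k(k+1))`, so completing the square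
turns this identity into `∑ k, ζ ^ k² = ∏ j < n, (ζ ^ (2j+1) - ζ ^ (-(2j+1)))`. The square of the
product is `(-1) ^ n (2n+1)`, because the exponents `±(2j+1)` run through all nonzero residues. For
`ζ = exp (-2πi/(2n+1))` the factors are `-2i sin (2π(2j+1)/(2n+1))`, and counting the `⌊n/2⌋`
negative sines determines the sign.
-/

open Finset

section Semiring

variable {R : Type*} [Semiring R]

/-- The Gaussian binomial coefficient `[m, k]_q`, encoded by the `q`-Pascal recursion so that it
makes sense for every `q`, roots of unity included. -/
def gaussBinom (q : R) : ℕ → ℕ → R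
  | _, 0 => 1
  | 0, _ + 1 => 0
  | m + 1, k + 1 => gaussBinom q m k + q ^ (k + 1) * gaussBinom q m (k + 1)

@[simp]
lemma gaussBinom_zero_right (q : R) (m : ℕ) : gaussBinom q m 0 = 1 := by
  cases m <;> rfl

@[simp]
lemma gaussBinom_zero_succ (q : R) (k : ℕ) : gaussBinom q 0 (k + 1) = 0 := rfl

lemma gaussBinom_succ_succ (q : R) (m k : ℕ) :
    gaussBinom q (m + 1) (k + 1) = gaussBinom q m k + q ^ (k + 1) * gaussBinom q m (k + 1) := rfl

lemma gaussBinom_eq_zero_of_lt (q : R) {m k : ℕ} (h : m < k) : gaussBinom q m k = 0 := by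
  induction m generalizing k with
  | zero =>
    obtain ⟨k, rfl⟩ := Nat.exists_eq_add_of_lt h
    simp
  | succ m ih =>
    obtain ⟨k, rfl⟩ := Nat.exists_eq_succ_of_ne_zero (Nat.ne_zero_of_lt h)
    rw [gaussBinom_succ_succ, ih (by lia), ih (by lia)]
    simp

end Semiring

section CommRing

variable {R : Type*} [CommRing R]

lemma one_sub_pow_mul_gaussBinom_succ_succ (q : R) (m k : ℕ) :
    (1 - q ^ (k + 1)) * gaussBinom q (m + 1) (k + 1) = (1 - q ^ (m + 1)) * gaussBinom q m k := by
  induction m generalizing k with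
  | zero => cases k <;> simp [gaussBinom_succ_succ]
  | succ m ih =>
    cases k with
    | zero =>
      rw [gaussBinom_succ_succ, gaussBinom_zero_right]
      linear_combination q * ih 0 + q * (1 - q ^ (m + 1)) * gaussBinom_zero_right q m
    | succ k =>
      rw [gaussBinom_succ_succ q (m + 1)]
      linear_combination q ^ (k + 2) * ih (k + 1) + q * ih k -
        q * (1 - q ^ (m + 1)) * gaussBinom_succ_succ q m k

lemma gaussBinom_add_two_succ (q : R) (m k : ℕ) :
    gaussBinom q (m + 2) (k + 1) = gaussBinom q (m + 1) k + gaussBinom q (m + 1) (k + 1) -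
      (1 - q ^ (m + 1)) * gaussBinom q m k := by
  rw [gaussBinom_succ_succ]
  linear_combination -one_sub_pow_mul_gaussBinom_succ_succ q m k

lemma sum_neg_one_pow_mul_gaussBinom_add_two (q : R) (m : ℕ) :
    ∑ k ∈ range (m + 3), (-1) ^ k * gaussBinom q (m + 2) k =
      (1 - q ^ (m + 1)) * ∑ k ∈ range (m + 1), (-1) ^ k * gaussBinom q m k := by
  let f (k : ℕ) : R := (-1) ^ k * gaussBinom q (m + 1) k
  have hf : ∑ k ∈ range (m + 2), (f (k + 1) - f k) = -1 := by
    rw [sum_range_sub]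
    simp [f, gaussBinom_eq_zero_of_lt]
  have hstep (k : ℕ) : (-1) ^ (k + 1) * gaussBinom q (m + 2) (k + 1) =
      f (k + 1) - f k + (1 - q ^ (m + 1)) * ((-1) ^ k * gaussBinom q m k) := by
    rw [gaussBinom_add_two_succ]
    ring
  rw [sum_range_succ', sum_congr rfl fun k _ ↦ hstep k, sum_add_distrib, hf, ← mul_sum,
    sum_range_succ _ (m + 1), gaussBinom_eq_zero_of_lt q m.lt_succ_self]
  simp

theorem sum_neg_one_pow_mul_gaussBinom_two_mul (q : R) (n : ℕ) :
    ∑ k ∈ range (2 * n + 1), (-1) ^ k * gaussBinom q (2 * n) k =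
      ∏ j ∈ range n, (1 - q ^ (2 * j + 1)) := by
  induction n with
  | zero => simp
  | succ n ih =>
    rw [prod_range_succ, ← ih, mul_comm _ (1 - _)]
    exact sum_neg_one_pow_mul_gaussBinom_add_two q (2 * n)

variable [IsDomain R]

lemma gaussBinom_eq_zero_of_isPrimitiveRoot {q : R} {m k : ℕ} (hq : IsPrimitiveRoot q (m + 1))
    (hk : k < m) : gaussBinom q (m + 1) (k + 1) = 0 := by
  have hne : 1 - q ^ (k + 1) ≠ 0 :=
    sub_ne_zero.mpr (hq.pow_ne_one_of_pos_of_lt k.succ_ne_zero (by lia)).symm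
  have h := one_sub_pow_mul_gaussBinom_succ_succ q m k
  rw [hq.pow_eq_one, sub_self, zero_mul] at h
  exact (mul_eq_zero.mp h).resolve_left hne

lemma pow_choose_two_mul_gaussBinom {q : R} {m k : ℕ} (hq : IsPrimitiveRoot q (m + 1))
    (hk : k ≤ m) : q ^ (k + 1).choose 2 * gaussBinom q m k = (-1) ^ k := by
  induction k with
  | zero => simp
  | succ k ih =>
    have hpascal := gaussBinom_succ_succ q m k
    rw [gaussBinom_eq_zero_of_isPrimitiveRoot hq hk] at hpascal
    rw [Nat.choose_succ_succ' (k + 1) 1, Nat.choose_one_right, pow_add, pow_succ (-1 : R),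
      ← ih (by lia)]
    linear_combination -q ^ (k + 1).choose 2 * hpascal

end CommRing

lemma sum_range_add_of_periodic {M : Type*} [AddCommMonoid M] {f : ℕ → M} {N : ℕ}
    (hf : f.Periodic N) (a : ℕ) : ∑ k ∈ range N, f (k + a) = ∑ k ∈ range N, f k := by
  induction a with
  | zero => rfl
  | succ a ih =>
    cases N with
    | zero => rfl
    | succ N =>
      have hwrap : f (N + (a + 1)) = f (0 + a) := by
        rw [zero_add, ← hf a]
        congr 1
        ring
      rw [← ih, sum_range_succ, sum_range_succ', hwrap]
      simp only [add_right_comm, add_assoc]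

lemma prod_range_two_mul {M : Type*} [CommMonoid M] (f : ℕ → M) (n : ℕ) :
    ∏ k ∈ range (2 * n), f k = (∏ j ∈ range n, f (2 * j)) * ∏ j ∈ range n, f (2 * j + 1) := by
  induction n with
  | zero => simp
  | succ n ih =>
    rw [mul_add_one, prod_range_succ, prod_range_succ, ih, prod_range_succ, prod_range_succ]
    ac_rfl

lemma pow_sq_periodic {M : Type*} [Monoid M] {ζ : M} {N : ℕ} (hζ : ζ ^ N = 1) :
    (fun k ↦ ζ ^ k ^ 2).Periodic N := fun k ↦ by
  have hexp : (k + N) ^ 2 = k ^ 2 + N * (2 * k + N) := by ring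
  simp only [hexp, pow_add, pow_mul ζ N, hζ, one_pow, mul_one]

lemma prod_pow_odd {M : Type*} [CommMonoid M] (x : M) (n : ℕ) :
    ∏ j ∈ range n, x ^ (2 * j + 1) = x ^ n ^ 2 := by
  induction n with
  | zero => simp
  | succ n ih => rw [prod_range_succ, ih, ← pow_add]; congr 1; ring

section Field

variable {K : Type*} [Field K] {ζ : K} {n : ℕ}

lemma neg_one_pow_mul_gaussBinom_inv_sq (hζ : IsPrimitiveRoot ζ (2 * n + 1)) {k : ℕ}
    (hk : k ≤ 2 * n) : (-1) ^ k * gaussBinom (ζ⁻¹ ^ 2) (2 * n) k = ζ ^ (k * (k + 1)) := by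
  have hq : IsPrimitiveRoot (ζ⁻¹ ^ 2) (2 * n + 1) := hζ.inv.pow_of_coprime 2 (by simp)
  have hchoose : 2 * (k + 1).choose 2 = k * (k + 1) := by
    rw [Nat.choose_two_right, Nat.mul_div_cancel' (Nat.even_mul_pred_self _).two_dvd,
      Nat.add_sub_cancel, mul_comm]
  have hζ0 : ζ ^ (k * (k + 1)) ≠ 0 := pow_ne_zero _ (hζ.ne_zero (by lia))
  have h := pow_choose_two_mul_gaussBinom hq hk
  rw [← pow_mul, hchoose, inv_pow, inv_mul_eq_iff_eq_mul₀ hζ0] at h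
  rw [h, mul_left_comm, ← mul_pow, neg_one_mul, neg_neg, one_pow, mul_one]

theorem sum_pow_sq_eq_prod (hζ : IsPrimitiveRoot ζ (2 * n + 1)) :
    ∑ k ∈ range (2 * n + 1), ζ ^ k ^ 2 =
      ∏ j ∈ range n, (ζ ^ (2 * j + 1) - ζ⁻¹ ^ (2 * j + 1)) := by
  have hζ0 : ζ ≠ 0 := hζ.ne_zero (by lia)
  have hsquare (k : ℕ) : ζ ^ (k + (n + 1)) ^ 2 = ζ ^ n ^ 2 * ζ ^ (k * (k + 1)) := by
    have hexp : (k + (n + 1)) ^ 2 = n ^ 2 + k * (k + 1) + (2 * n + 1) * (k + 1) := by ring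
    rw [hexp, pow_add, pow_mul ζ (2 * n + 1), hζ.pow_eq_one, one_pow, mul_one, pow_add]
  calc ∑ k ∈ range (2 * n + 1), ζ ^ k ^ 2
      = ∑ k ∈ range (2 * n + 1), ζ ^ (k + (n + 1)) ^ 2 :=
        (sum_range_add_of_periodic (pow_sq_periodic hζ.pow_eq_one) (n + 1)).symm
    _ = ζ ^ n ^ 2 * ∑ k ∈ range (2 * n + 1), (-1) ^ k * gaussBinom (ζ⁻¹ ^ 2) (2 * n) k := by
        rw [mul_sum]
        refine sum_congr rfl fun k hk ↦ ?_
        rw [hsquare, neg_one_pow_mul_gaussBinom_inv_sq hζ (mem_range_succ_iff.mp hk)]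
    _ = ∏ j ∈ range n, ζ ^ (2 * j + 1) * (1 - (ζ⁻¹ ^ 2) ^ (2 * j + 1)) := by
        rw [sum_neg_one_pow_mul_gaussBinom_two_mul, prod_mul_distrib, prod_pow_odd]
    _ = ∏ j ∈ range n, (ζ ^ (2 * j + 1) - ζ⁻¹ ^ (2 * j + 1)) := by
        refine prod_congr rfl fun j _ ↦ ?_
        have hinv : ζ ^ (2 * j + 1) * ζ⁻¹ ^ (2 * j + 1) = 1 := by
          rw [← mul_pow, mul_inv_cancel₀ hζ0, one_pow]
        rw [pow_right_comm]
        linear_combination -ζ⁻¹ ^ (2 * j + 1) * hinv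

lemma prod_one_sub_pow_odd_mul_prod_one_sub_inv_pow_odd (hζ : IsPrimitiveRoot ζ (2 * n + 1)) :
    (∏ j ∈ range n, (1 - ζ ^ (2 * j + 1))) * ∏ j ∈ range n, (1 - ζ⁻¹ ^ (2 * j + 1)) =
      2 * n + 1 := by
  have hreflect : ∏ j ∈ range n, (1 - ζ⁻¹ ^ (2 * j + 1)) =
      ∏ j ∈ range n, (1 - ζ ^ (2 * j + 1 + 1)) := by
    rw [← prod_range_reflect]
    refine prod_congr rfl fun j hj ↦ ?_
    have hj : j < n := mem_range.mp hj
    have hmul : ζ ^ (2 * j + 1 + 1) * ζ ^ (2 * (n - 1 - j) + 1) = 1 := by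
      rw [← pow_add, ← hζ.pow_eq_one]
      congr 1
      lia
    rw [inv_pow, eq_inv_of_mul_eq_one_left hmul]
  rw [hreflect, ← prod_range_two_mul fun k ↦ 1 - ζ ^ (k + 1), hζ.prod_one_sub_pow_eq_order]
  push_cast
  rfl

theorem prod_pow_odd_sub_inv_pow_odd_sq (hζ : IsPrimitiveRoot ζ (2 * n + 1)) :
    (∏ j ∈ range n, (ζ ^ (2 * j + 1) - ζ⁻¹ ^ (2 * j + 1))) ^ 2 = (-1) ^ n * (2 * n + 1) := by
  have hζ0 : ζ ≠ 0 := hζ.ne_zero (by lia)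
  have hζsq : IsPrimitiveRoot (ζ ^ 2) (2 * n + 1) := hζ.pow_of_coprime 2 (by simp)
  have hfactor (j : ℕ) : (ζ ^ (2 * j + 1) - ζ⁻¹ ^ (2 * j + 1)) ^ 2 =
      -1 * ((1 - (ζ ^ 2) ^ (2 * j + 1)) * (1 - (ζ ^ 2)⁻¹ ^ (2 * j + 1))) := by
    rw [← inv_pow ζ, pow_right_comm ζ, pow_right_comm ζ⁻¹, inv_pow ζ]
    field_simp
    ring
  simp only [← prod_pow, hfactor, prod_mul_distrib, prod_const, card_range,
    prod_one_sub_pow_odd_mul_prod_one_sub_inv_pow_odd hζsq]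

end Field

section Sine

variable {n j : ℕ}

lemma sin_two_pi_mul_odd_div_pos (h : 2 * j < n) :
    0 < Real.sin (2 * Real.pi * (2 * j + 1) / (2 * n + 1)) := by
  have hle : (2 * j + 1 : ℝ) ≤ n := by exact_mod_cast h
  refine Real.sin_pos_of_pos_of_lt_pi (by positivity) ?_
  rw [div_lt_iff₀ (by positivity)]
  nlinarith [Real.pi_pos]

lemma sin_two_pi_mul_odd_div_neg (h : n ≤ 2 * j) (hj : j < n) :
    Real.sin (2 * Real.pi * (2 * j + 1) / (2 * n + 1)) < 0 := by
  have hle : (n : ℝ) ≤ 2 * j := by exact_mod_cast h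
  have hj : (j : ℝ) + 1 ≤ n := by exact_mod_cast hj
  rw [← Real.sin_sub_two_pi]
  refine Real.sin_neg_of_neg_of_neg_pi_lt ?_ ?_
  · rw [sub_neg, div_lt_iff₀ (by positivity)]
    nlinarith [Real.pi_pos]
  · rw [lt_sub_iff_add_lt, lt_div_iff₀ (by positivity)]
    nlinarith [Real.pi_pos]

lemma neg_one_pow_mul_prod_two_mul_sin_pos (n : ℕ) :
    0 < (-1) ^ (n / 2) *
      ∏ j ∈ range n, 2 * Real.sin (2 * Real.pi * (2 * j + 1) / (2 * n + 1)) := by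
  let f (j : ℕ) : ℝ := 2 * Real.sin (2 * Real.pi * (2 * j + 1) / (2 * n + 1))
  have hsplit : (-1) ^ (n / 2) * ∏ j ∈ range n, f j =
      (∏ j ∈ range (n - n / 2), f j) * ∏ j ∈ range (n / 2), -f (n - n / 2 + j) := by
    rw [prod_neg, card_range, mul_left_comm, ← prod_range_add, Nat.sub_add_cancel (n.div_le_self 2)]
  change 0 < (-1) ^ (n / 2) * ∏ j ∈ range n, f j
  rw [hsplit]
  refine mul_pos (prod_pos fun j hj ↦ ?_) (prod_pos fun j hj ↦ neg_pos.mpr ?_)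
  · exact mul_pos two_pos (sin_two_pi_mul_odd_div_pos (by grind))
  · exact mul_neg_of_pos_of_neg two_pos (sin_two_pi_mul_odd_div_neg (by grind) (by grind))

end Sine

lemma exp_neg_mul_I_sub_exp_mul_I (x : ℂ) : exp (-(x * I)) - exp (x * I) = -I * (2 * sin x) := by
  rw [two_sin, neg_mul x]
  linear_combination (exp (-(x * I)) - exp (x * I)) * I_sq

lemma pow_odd_sub_inv_pow_odd_exp (n j : ℕ) :
    exp (-(2 * Real.pi * I / (2 * n + 1 : ℕ))) ^ (2 * j + 1) -
        (exp (-(2 * Real.pi * I / (2 * n + 1 : ℕ))))⁻¹ ^ (2 * j + 1) =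
      -I * (2 * Real.sin (2 * Real.pi * (2 * j + 1) / (2 * n + 1)) : ℝ) := by
  push_cast
  rw [← exp_neg_mul_I_sub_exp_mul_I, ← exp_neg, neg_neg, ← exp_nat_mul, ← exp_nat_mul]
  push_cast
  ring_nf

lemma isPrimitiveRoot_exp_neg {N : ℕ} (hN : N ≠ 0) :
    IsPrimitiveRoot (exp (-(2 * Real.pi * I / N))) N := by
  rw [exp_neg]
  exact (isPrimitiveRoot_exp N hN).inv

lemma prod_pow_odd_sub_inv_pow_odd_exp (n : ℕ) :
    ∏ j ∈ range n, (exp (-(2 * Real.pi * I / (2 * n + 1 : ℕ))) ^ (2 * j + 1) -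
        (exp (-(2 * Real.pi * I / (2 * n + 1 : ℕ))))⁻¹ ^ (2 * j + 1)) =
      (-I) ^ n *
        (∏ j ∈ range n, 2 * Real.sin (2 * Real.pi * (2 * j + 1) / (2 * n + 1)) : ℝ) := by
  rw [ofReal_prod, ← card_range n, ← prod_const, card_range, ← prod_mul_distrib]
  exact prod_congr rfl fun j _ ↦ pow_odd_sub_inv_pow_odd_exp n j

theorem prod_two_mul_sin_two_pi_mul_odd_div (n : ℕ) :
    ∏ j ∈ range n, 2 * Real.sin (2 * Real.pi * (2 * j + 1) / (2 * n + 1)) =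
      (-1) ^ (n / 2) * Real.sqrt (2 * n + 1 : ℕ) := by
  have hpos := neg_one_pow_mul_prod_two_mul_sin_pos n
  have hprod := prod_pow_odd_sub_inv_pow_odd_exp n
  set S : ℝ := ∏ j ∈ range n, 2 * Real.sin (2 * Real.pi * (2 * j + 1) / (2 * n + 1))
  have hsq : S ^ 2 = (2 * n + 1 : ℕ) := by
    have h := prod_pow_odd_sub_inv_pow_odd_sq (isPrimitiveRoot_exp_neg (2 * n).succ_ne_zero)
    rw [hprod, mul_pow, pow_right_comm, neg_sq, I_sq] at h
    exact_mod_cast mul_left_cancel₀ (pow_ne_zero n (neg_ne_zero.mpr one_ne_zero)) h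
  have hsign : ((-1 : ℝ) ^ (n / 2)) ^ 2 = 1 := by rw [pow_right_comm, neg_one_sq, one_pow]
  have hsqrt : Real.sqrt (2 * n + 1 : ℕ) = (-1) ^ (n / 2) * S := by
    rw [Real.sqrt_eq_iff_eq_sq (Nat.cast_nonneg _) hpos.le, mul_pow, hsq, hsign, one_mul]
  rw [hsqrt, ← mul_assoc, ← sq, hsign, one_mul]

theorem sum_exp_neg_sq_eq (n : ℕ) :
    ∑ k ∈ range (2 * n + 1), exp (-(2 * Real.pi * I * (k : ℂ) ^ 2) / (2 * n + 1 : ℕ)) =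
      (-I) ^ (n % 2) * Real.sqrt (2 * n + 1 : ℕ) := by
  have hterm (k : ℕ) : exp (-(2 * Real.pi * I * (k : ℂ) ^ 2) / (2 * n + 1 : ℕ)) =
      exp (-(2 * Real.pi * I / (2 * n + 1 : ℕ))) ^ k ^ 2 := by
    rw [← exp_nat_mul]
    push_cast
    ring_nf
  have hphase : (-I) ^ n * (-1) ^ (n / 2) = (-I) ^ (n % 2) := by
    conv_lhs => enter [1]; rw [← Nat.mod_add_div n 2]
    rw [pow_add, pow_mul, neg_sq, I_sq, mul_assoc, ← mul_pow, neg_one_mul, neg_neg, one_pow,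
      mul_one]
  rw [sum_congr rfl fun k _ ↦ hterm k,
    sum_pow_sq_eq_prod (isPrimitiveRoot_exp_neg (2 * n).succ_ne_zero),
    prod_pow_odd_sub_inv_pow_odd_exp, prod_two_mul_sin_two_pi_mul_odd_div, ← hphase]
  push_cast
  ring

theorem gauss_sum_odd (N : ℕ) (hN : 1 ≤ N) (hodd : Odd N) :
    (N % 4 = 1 →
      ∑ k ∈ Finset.range N, Complex.exp (-(2 * Real.pi * I * (k : ℂ) ^ 2) / N) =
        Real.sqrt N) ∧
    (N % 4 = 3 →
      ∑ k ∈ Finset.range N, Complex.exp (-(2 * Real.pi * I * (k : ℂ) ^ 2) / N) =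
        -I * Real.sqrt N) := by
  obtain ⟨n, rfl⟩ := hodd
  rw [sum_exp_neg_sq_eq]
  refine ⟨fun h ↦ ?_, fun h ↦ ?_⟩
  · rw [show n % 2 = 0 by lia, pow_zero, one_mul]
  · rw [show n % 2 = 1 by lia, pow_one]
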